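/- (Lemma 1: one-step descent inequality for Muon.) Let W, C ∈ ℝ^{m×n}, let η > 0, let O be a semi-orthogonal matrix maximizing C•O' over all semi-orthogonal O' ∈ ℝ^{m×n}, and set W' = W − ηO. Then f(W) − f(W') ≥ η‖∇f(W)‖_F − 2√n·η·‖∇f(W) − C‖_F − (nLη²)/2. -/

import Mathlib

/-!
Write `G = gradf W` and `A • B` for the Frobenius pairing. Three facts carry the proof.

* Descent lemma (`descent_along`): `f (W - η O) ≤ f W - η (G • O) + n L η² / 2`, since `‖O‖_F² = n` and
  `t ↦ f (W - t O) + t (G • O) - L n t² / 2` has nonpositive derivative on `[0, η]`.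
* Nuclear norm bound (`exists_semiOrth_fnorm_le`): some semi-orthogonal `O'` satisfies
  `C • O' = ∑ σⱼ ≥ (∑ σⱼ²)^(1/2) = ‖C‖_F`, with `σⱼ` the singular values of `C`. Maximality of `O`
  then gives `C • O ≥ ‖C‖_F`.
* Cauchy–Schwarz: `(G - C) • O ≥ -√n ‖G - C‖_F`.

Hence `G • O ≥ ‖C‖_F - √n ‖G - C‖_F ≥ ‖G‖_F - (1 + √n) ‖G - C‖_F`, and `1 ≤ √n`.
-/

open MeasureTheory Real Finset Matrix

attribute [local instance] Matrix.frobeniusNormedAddCommGroup Matrix.frobeniusNormedSpace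

/-- Frobenius inner product `X • Y = trace (Xᵀ * Y)`. -/
noncomputable def fdot {m n : ℕ} (A B : Matrix (Fin m) (Fin n) ℝ) : ℝ :=
  Matrix.trace (Aᵀ * B)

/-- Frobenius norm. -/
noncomputable def fnorm {m n : ℕ} (A : Matrix (Fin m) (Fin n) ℝ) : ℝ :=
  Real.sqrt (fdot A A)

/-- A matrix `O` is semi-orthogonal if `Oᵀ * O = Iₙ`. -/
def SemiOrth {m n : ℕ} (O : Matrix (Fin m) (Fin n) ℝ) : Prop :=
  Oᵀ * O = 1

/-- The continuous linear map `H ↦ A • H` (Frobenius pairing with `A`). -/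
noncomputable def fdotCLM {m n : ℕ} (A : Matrix (Fin m) (Fin n) ℝ) :
    Matrix (Fin m) (Fin n) ℝ →L[ℝ] ℝ :=
  LinearMap.toContinuousLinearMap
    { toFun := fun H => fdot A H
      map_add' := by
        intro x y
        simp [fdot, Matrix.mul_add]
      map_smul' := by
        intro c x
        simp [fdot, Matrix.mul_smul] }

lemma fdot_eq_sum {m n : ℕ} (A B : Matrix (Fin m) (Fin n) ℝ) :
    fdot A B = ∑ p : Fin m × Fin n, A p.1 p.2 * B p.1 p.2 := by
  rw [Fintype.sum_prod_type_right]
  simp [fdot, Matrix.trace, Matrix.mul_apply]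

lemma fdot_le_fnorm_mul {m n : ℕ} (A B : Matrix (Fin m) (Fin n) ℝ) :
    fdot A B ≤ fnorm A * fnorm B := by
  simp only [fnorm, fdot_eq_sum, ← sq]
  exact Real.sum_mul_le_sqrt_mul_sqrt _ _ _

lemma fdot_sub_left {m n : ℕ} (A B D : Matrix (Fin m) (Fin n) ℝ) :
    fdot (A - B) D = fdot A D - fdot B D := by
  simp [fdot, Matrix.sub_mul]

lemma fdot_neg_left {m n : ℕ} (A D : Matrix (Fin m) (Fin n) ℝ) :
    fdot (-A) D = - fdot A D := by
  simp [fdot]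

lemma fdot_neg_right {m n : ℕ} (A D : Matrix (Fin m) (Fin n) ℝ) :
    fdot A (-D) = - fdot A D := by
  simp [fdot]

lemma fnorm_eq_norm {m n : ℕ} (A : Matrix (Fin m) (Fin n) ℝ) : fnorm A = ‖A‖ := by
  rw [Matrix.frobenius_norm_def, fnorm, fdot_eq_sum, Fintype.sum_prod_type, Real.sqrt_eq_rpow]
  simp [← sq]

lemma fnorm_semiOrth {m n : ℕ} {O : Matrix (Fin m) (Fin n) ℝ} (hO : SemiOrth O) :
    fnorm O = Real.sqrt n := by
  have h : Oᵀ * O = 1 := hO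
  simp [fnorm, fdot, h]

/-- Orthogonal (possibly zero) vectors `u j` in a space of large enough dimension are nonnegative
multiples of an orthonormal family: normalize the nonzero ones and complete the family. -/
lemma exists_orthonormal_inner_eq_norm {m n : ℕ} (hmn : n ≤ m)
    (u : Fin n → EuclideanSpace ℝ (Fin m)) (hu : ∀ i j, i ≠ j → inner ℝ (u i) (u j) = 0) :
    ∃ b : Fin n → EuclideanSpace ℝ (Fin m), Orthonormal ℝ b ∧
      ∀ j, inner ℝ (u j) (b j) = ‖u j‖ := by
  have hinj : Function.Injective (Fin.castLE hmn) := Fin.castLE_injective hmn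
  let w : Fin m → EuclideanSpace ℝ (Fin m) :=
    Function.extend (Fin.castLE hmn) (fun j => ‖u j‖⁻¹ • u j) 0
  have hw : ∀ j, w (Fin.castLE hmn j) = ‖u j‖⁻¹ • u j := fun j => hinj.extend_apply _ _ _
  let s : Set (Fin m) := {k | ∃ j, Fin.castLE hmn j = k ∧ u j ≠ 0}
  have hs : Orthonormal ℝ (s.domRestrict w) := by
    constructor
    · rintro ⟨_, j, rfl, hj⟩
      simp only [Set.domRestrict_apply, hw, norm_smul, norm_inv, norm_norm]
      exact inv_mul_cancel₀ (norm_ne_zero_iff.mpr hj)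
    · rintro ⟨_, i, rfl, hi⟩ ⟨_, j, rfl, hj⟩ hij
      have hne : i ≠ j := by
        rintro rfl
        exact hij rfl
      simp [hw, inner_smul_left, inner_smul_right, hu i j hne]
  obtain ⟨b, hb⟩ := hs.exists_orthonormalBasis_extension_of_card_eq (by simp)
  refine ⟨fun j => b (Fin.castLE hmn j), b.orthonormal.comp _ hinj, fun j => ?_⟩
  by_cases hj : u j = 0
  · simp [hj]
  · have h0 : ‖u j‖ ≠ 0 := norm_ne_zero_iff.mpr hj
    simp only [hb _ ⟨j, rfl, hj⟩, hw, inner_smul_right, real_inner_self_eq_norm_sq]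
    field_simp

/-- The nuclear norm dominates the Frobenius norm, and is attained on a semi-orthogonal matrix.
With `V` an orthogonal matrix diagonalizing `Cᵀ * C`, the columns of `C * V` are orthogonal;
the witness is `B * Vᵀ`, with the columns of `B` the directions of those of `C * V`. -/
lemma exists_semiOrth_fnorm_le {m n : ℕ} (hmn : n ≤ m) (C : Matrix (Fin m) (Fin n) ℝ) :
    ∃ O : Matrix (Fin m) (Fin n) ℝ, SemiOrth O ∧ fnorm C ≤ fdot C O := by
  obtain ⟨V, d, hV, hV', hd⟩ : ∃ (V : Matrix (Fin n) (Fin n) ℝ) (d : Fin n → ℝ),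
      Vᵀ * V = 1 ∧ V * Vᵀ = 1 ∧ Vᵀ * (Cᵀ * C) * V = Matrix.diagonal d := by
    have hA : (Cᵀ * C).IsHermitian := by
      simpa using Matrix.isHermitian_conjTranspose_mul_self C
    have h1 := Unitary.coe_star_mul_self hA.eigenvectorUnitary
    have h2 := Unitary.coe_mul_star_self hA.eigenvectorUnitary
    have h3 := hA.conjStarAlgAut_star_eigenvectorUnitary
    rw [Unitary.conjStarAlgAut_apply] at h3
    simp only [Matrix.star_eq_conjTranspose, Matrix.conjTranspose_eq_transpose_of_trivial,
      Unitary.coe_star] at h1 h2 h3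
    exact ⟨_, _, h1, h2, by simpa using h3⟩
  let M := C * V
  have hM : Mᵀ * M = Matrix.diagonal d := by
    rw [← hd]
    simp [M, Matrix.transpose_mul, Matrix.mul_assoc]
  let u : Fin n → EuclideanSpace ℝ (Fin m) := fun j => WithLp.toLp 2 fun i => M i j
  have hu : ∀ i j, inner ℝ (u i) (u j) = (Mᵀ * M) i j := fun i j => by
    simp [u, PiLp.inner_apply, Matrix.mul_apply, mul_comm]
  obtain ⟨b, hb, hub⟩ := exists_orthonormal_inner_eq_norm hmn u fun i j hij => by
    rw [hu, hM, Matrix.diagonal_apply_ne _ hij]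
  let B : Matrix (Fin m) (Fin n) ℝ := Matrix.of fun i j => b j i
  have hB : Bᵀ * B = 1 := by
    ext i j
    have h := orthonormal_iff_ite.mp hb i j
    rw [Matrix.one_apply, ← h]
    simp [B, PiLp.inner_apply, Matrix.mul_apply, mul_comm]
  refine ⟨B * Vᵀ, ?_, ?_⟩
  · show (B * Vᵀ)ᵀ * (B * Vᵀ) = 1
    rw [Matrix.transpose_mul, Matrix.transpose_transpose, Matrix.mul_assoc, ← Matrix.mul_assoc Bᵀ,
      hB, Matrix.one_mul, hV']
  · have hpair : fdot C (B * Vᵀ) = ∑ j, ‖u j‖ := by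
      have h : fdot C (B * Vᵀ) = (Mᵀ * B).trace := by
        rw [fdot, ← Matrix.mul_assoc, Matrix.trace_mul_comm, ← Matrix.mul_assoc]
        simp [M, Matrix.transpose_mul]
      rw [h, Matrix.trace]
      refine Finset.sum_congr rfl fun j _ => ?_
      rw [← hub j]
      simp [u, B, PiLp.inner_apply, Matrix.mul_apply, mul_comm]
    have hself : fdot C C = ∑ j, ‖u j‖ ^ 2 := by
      have h : fdot C C = (Mᵀ * M).trace := by
        simp only [M, Matrix.transpose_mul]
        rw [← Matrix.mul_assoc, Matrix.trace_mul_comm, ← Matrix.mul_assoc, ← Matrix.mul_assoc, hV',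
          Matrix.one_mul, fdot]
      rw [h, Matrix.trace]
      refine Finset.sum_congr rfl fun j _ => ?_
      rw [← real_inner_self_eq_norm_sq, hu, Matrix.diag_apply]
    rw [fnorm, hpair, hself]
    refine Real.sqrt_le_iff.mpr ⟨Finset.sum_nonneg fun j _ => norm_nonneg _, ?_⟩
    exact Finset.sum_sq_le_sq_sum_of_nonneg fun j _ => norm_nonneg _

/-- The descent lemma for an `L`-smooth function, along a semi-orthogonal direction. -/
lemma descent_along {m n : ℕ}
    (f : Matrix (Fin m) (Fin n) ℝ → ℝ)
    (gradf : Matrix (Fin m) (Fin n) ℝ → Matrix (Fin m) (Fin n) ℝ)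
    (L : ℝ)
    (hdiff : ∀ X : Matrix (Fin m) (Fin n) ℝ, HasFDerivAt f (fdotCLM (gradf X)) X)
    (hlip : ∀ X Y : Matrix (Fin m) (Fin n) ℝ,
      fnorm (gradf X - gradf Y) ≤ L * fnorm (X - Y))
    (W O : Matrix (Fin m) (Fin n) ℝ) (η : ℝ) (hη : 0 < η) (hO : SemiOrth O) :
    f (W - η • O) ≤ f W - η * fdot (gradf W) O + n * L * η ^ 2 / 2 := by
  let h : ℝ → ℝ := fun t => f (W - t • O) + t * fdot (gradf W) O - n * L * t ^ 2 / 2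
  have hder : ∀ t, HasDerivAt h
      (- fdot (gradf (W - t • O)) O + fdot (gradf W) O - n * L * t) t := by
    intro t
    have h1 : HasDerivAt (fun t : ℝ => W - t • O) (-O) t := by
      have h0 := ((hasDerivAt_id t).smul_const O).const_sub W
      rw [one_smul] at h0
      exact h0
    have h2 : HasDerivAt (fun t : ℝ => f (W - t • O)) (- fdot (gradf (W - t • O)) O) t := by
      refine ((hdiff (W - t • O)).comp_hasDerivAt t h1).congr_deriv ?_
      exact fdot_neg_right _ _
    have h3 : HasDerivAt (fun t : ℝ => t * fdot (gradf W) O) (fdot (gradf W) O) t := by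
      simpa using (hasDerivAt_id t).mul_const (fdot (gradf W) O)
    have h4 : HasDerivAt (fun t : ℝ => n * L * t ^ 2 / 2) (n * L * t) t := by
      refine (((hasDerivAt_pow 2 t).const_mul (n * L)).div_const 2).congr_deriv ?_
      norm_num
      ring
    exact (h2.add h3).sub h4
  have hanti : AntitoneOn h (Set.Icc 0 η) := by
    refine antitoneOn_of_deriv_nonpos (convex_Icc 0 η)
      (fun t _ => (hder t).continuousAt.continuousWithinAt)
      (fun t _ => (hder t).differentiableAt.differentiableWithinAt) fun t ht => ?_
    rw [interior_Icc] at ht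
    rw [(hder t).deriv]
    have hcs := fdot_le_fnorm_mul (gradf W - gradf (W - t • O)) O
    have hl := hlip W (W - t • O)
    have hst : fnorm (W - (W - t • O)) = t * Real.sqrt n := by
      rw [sub_sub_cancel, fnorm_eq_norm, norm_smul, ← fnorm_eq_norm, fnorm_semiOrth hO,
        Real.norm_of_nonneg ht.1.le]
    rw [hst] at hl
    rw [fdot_sub_left, fnorm_semiOrth hO] at hcs
    have hmul := mul_le_mul_of_nonneg_right hl (Real.sqrt_nonneg (n : ℝ))
    have hsq : L * (t * Real.sqrt n) * Real.sqrt n = n * L * t := by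
      linear_combination L * t * Real.mul_self_sqrt (Nat.cast_nonneg (α := ℝ) n)
    linarith
  have hfin := hanti (Set.left_mem_Icc.mpr hη.le) (Set.right_mem_Icc.mpr hη.le) hη.le
  simp only [h, zero_smul, sub_zero] at hfin
  linarith

/-- Lemma 1: one-step descent inequality for Muon. -/
theorem muon_one_step_descent {m n : ℕ} (hn : 1 ≤ n) (hmn : n ≤ m)
    (f : Matrix (Fin m) (Fin n) ℝ → ℝ)
    (gradf : Matrix (Fin m) (Fin n) ℝ → Matrix (Fin m) (Fin n) ℝ)
    (L : ℝ) (hL : 0 < L)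
    (hdiff : ∀ X : Matrix (Fin m) (Fin n) ℝ, HasFDerivAt f (fdotCLM (gradf X)) X)
    (hlip : ∀ X Y : Matrix (Fin m) (Fin n) ℝ,
      fnorm (gradf X - gradf Y) ≤ L * fnorm (X - Y))
    (W C O : Matrix (Fin m) (Fin n) ℝ) (η : ℝ) (hη : 0 < η)
    (hO : SemiOrth O)
    (hmax : ∀ O' : Matrix (Fin m) (Fin n) ℝ, SemiOrth O' → fdot C O' ≤ fdot C O)
    (W' : Matrix (Fin m) (Fin n) ℝ) (hW' : W' = W - η • O) :
    η * fnorm (gradf W) - 2 * Real.sqrt n * η * fnorm (gradf W - C)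
      - n * L * η ^ 2 / 2 ≤ f W - f W' := by
  subst hW'
  obtain ⟨O', hO', hC'⟩ := exists_semiOrth_fnorm_le hmn C
  have hC : fnorm C ≤ fdot C O := hC'.trans (hmax O' hO')
  have hdesc := descent_along f gradf L hdiff hlip W O η hη hO
  have hcs := fdot_le_fnorm_mul (-(gradf W - C)) O
  rw [fdot_neg_left, fdot_sub_left, fnorm_semiOrth hO, fnorm_eq_norm, norm_neg,
    ← fnorm_eq_norm] at hcs
  have htri : fnorm (gradf W) ≤ fnorm C + fnorm (gradf W - C) := by
    simp only [fnorm_eq_norm]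
    exact norm_le_norm_add_norm_sub' (gradf W) C
  have hn1 : 1 ≤ Real.sqrt n := Real.one_le_sqrt.mpr (by exact_mod_cast hn)
  have hpos : 0 ≤ fnorm (gradf W - C) := Real.sqrt_nonneg _
  have hkey : fnorm (gradf W) - 2 * Real.sqrt n * fnorm (gradf W - C) ≤ fdot (gradf W) O := by
    nlinarith [mul_le_mul_of_nonneg_right hn1 hpos]
  have hmul := mul_le_mul_of_nonneg_left hkey hη.le
  linarith
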